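/- Suppose the real coefficients {A^{αβ} : α, β = 0,1,2,3} satisfy the null condition. Then there exists a constant C > 0, depending only on the coefficients, such that for all C^∞ functions w₁, w₂ on ℝ × ℝ³ and all (t, x) with x ≠ 0: |A^{αβ}(∂_α w₁)(∂_β w₂)(t,x)| ≤ C ( (Σ_{j=1}^3 |T_j w₁(t,x)|) |∂w₂(t,x)| + |∂w₁(t,x)| (Σ_{j=1}^3 |T_j w₂(t,x)|) ), with summation over repeated indices α, β ∈ {0,1,2,3}. -/

import Mathlib

/-!
At a point with `x ≠ 0` put `ω = x / |x|` and `X = (1, -ω)`, a null covector. Every partial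
derivative splits as `∂_α w = T_α w + X_α ∂_t w`, where `T_0 = 0` and the `T_j` are the good
derivatives. Substituting this for both factors of the null form, the term without good
derivatives is `(∂_t w₁)(∂_t w₂) A^{αβ} X_α X_β = 0`, and what remains is
`A^{αβ} (T_α w₁) (∂_β w₂) + A^{αβ} X_α (∂_t w₁) (T_β w₂)`. Each summand is at most `|A^{αβ}|` times
the expression that `C` multiplies, since `|X_α| ≤ 1`. Hence `C = 1 + Σ |A^{αβ}|` works.
-/

open MeasureTheory Real ENNReal FourierTransform
open scoped ContDiff

noncomputable section

/-- Euclidean space ℝⁿ. -/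
abbrev Spc (n : ℕ) := EuclideanSpace ℝ (Fin n)

/-- Space-time ℝ × ℝⁿ. -/
abbrev STn (n : ℕ) := ℝ × Spc n

variable {n : ℕ}

/-- Directional derivative in the space-time direction `v`. -/
def dirD (v : STn n) (f : STn n → ℝ) : STn n → ℝ := fun p => fderiv ℝ f p v

/-- Time derivative ∂_t. -/
def dtD : (STn n → ℝ) → STn n → ℝ := dirD (1, 0)

/-- Spatial derivative ∂_j. -/
def dxD (j : Fin n) : (STn n → ℝ) → STn n → ℝ := dirD (0, EuclideanSpace.single j 1)

/-- Spatial Laplacian. -/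
def lapD (f : STn n → ℝ) : STn n → ℝ := fun p => ∑ j, dxD j (dxD j f) p

/-- d'Alembertian □ = ∂_t² − Δ. -/
def boxD (f : STn n → ℝ) : STn n → ℝ := fun p => dtD (dtD f) p - lapD f p

/-- Lorentz boost L_j = t ∂_j + x_j ∂_t. -/
def LD (j : Fin n) (f : STn n → ℝ) : STn n → ℝ := fun p => p.1 * dxD j f p + p.2 j * dtD f p

/-- Rotation Ω_{jk} = x_j ∂_k − x_k ∂_j. -/
def RotD (j k : Fin n) (f : STn n → ℝ) : STn n → ℝ := fun p => p.2 j * dxD k f p - p.2 k * dxD j f p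

/-- Scaling S = t ∂_t + x·∇. -/
def SD (f : STn n → ℝ) : STn n → ℝ := fun p => p.1 * dtD f p + ∑ j, p.2 j * dxD j f p

/-- Index type for the Klainerman vector fields. -/
def GIdx (n : ℕ) := Option (Fin n) ⊕ Fin n ⊕ (Fin n × Fin n) ⊕ Unit

instance : Fintype (GIdx n) := by unfold GIdx; infer_instance
instance : DecidableEq (GIdx n) := by unfold GIdx; infer_instance

/-- The Klainerman vector field with index `i`. -/
def Gop : GIdx n → (STn n → ℝ) → STn n → ℝ
  | Sum.inl none => dtD
  | Sum.inl (some j) => dxD j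
  | Sum.inr (Sum.inl j) => LD j
  | Sum.inr (Sum.inr (Sum.inl jk)) => RotD jk.1 jk.2
  | Sum.inr (Sum.inr (Sum.inr _)) => SD

/-- Iterated composition Γ^α along a word of indices. -/
def GwL : List (GIdx n) → (STn n → ℝ) → STn n → ℝ
  | [], f => f
  | a :: l, f => Gop a (GwL l f)

/-- Sum of a quantity over all products of at most `N` Klainerman vector fields. -/
def SumW (N : ℕ) (Φ : (STn n → ℝ) → ℝ≥0∞) (f : STn n → ℝ) : ℝ≥0∞ :=
  ∑ m ∈ Finset.range (N + 1), ∑ w : Fin m → GIdx n, Φ (GwL (List.ofFn w) f)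

/-- Pointwise norm of the full space-time gradient ∂u = (∂_t u, ∇_x u). -/
def gradN (f : STn n → ℝ) (p : STn n) : ℝ := Real.sqrt ((dtD f p) ^ 2 + ∑ j, (dxD j f p) ^ 2)

/-- Fourier transform (in space) of a real valued function. -/
def fourierS (g : Spc n → ℝ) : Spc n → ℂ := 𝓕 (fun x => (g x : ℂ))

/-- ‖ |D|^s g ‖_{L²}, i.e. the L² norm of ξ ↦ |ξ|^s (ℱ g)(ξ). -/
def DsN (s : ℝ) (g : Spc n → ℝ) : ℝ≥0∞ :=
  eLpNorm (fun ξ : Spc n => ‖ξ‖ ^ s * ‖fourierS g ξ‖) 2 volume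

/-- The surface measure on the unit sphere of ℝⁿ. -/
def sphM (n : ℕ) : Measure (Metric.sphere (0 : Spc n) 1) := (volume : Measure (Spc n)).toSphere

/-- The L^q norm of g(r ω) over the unit sphere. -/
def sphN (n : ℕ) (q : ℝ) (g : Spc n → ℝ) (r : ℝ) : ℝ≥0∞ :=
  (∫⁻ o, (‖g (r • (o : Spc n))‖₊ : ℝ≥0∞) ^ q ∂(sphM n)) ^ (1 / q)

/-- The mixed norm ‖g‖_{p,q} = (∫_0^∞ ‖g(r·)‖_{L^q(S^{n-1})}^p r^{n-1} dr)^{1/p}. -/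
def mixN (n : ℕ) (p q : ℝ) (g : Spc n → ℝ) : ℝ≥0∞ :=
  (∫⁻ r in Set.Ioi (0 : ℝ), (sphN n q g r) ^ p * ENNReal.ofReal (r ^ (n - 1))) ^ (1 / p)

/-- A space-time function which is Schwartz in the space variable for each fixed time. -/
def SchwartzInX (v : STn n → ℝ) : Prop :=
  ∀ t : ℝ, ∃ φ : SchwartzMap (Spc n) ℝ, ∀ x, v (t, x) = φ x

/-- The space-time partial derivatives ∂_0 = ∂_t, ∂_j (j = 1,2,3) on ℝ × ℝ³. -/
def pd4 (α : Fin 4) : (STn 3 → ℝ) → STn 3 → ℝ := Fin.cases dtD (fun j => dxD j) α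

/-- The null condition for a set of coefficients {A^{αβ}}. -/
def NullCond (A : Fin 4 → Fin 4 → ℝ) : Prop :=
  ∀ X : Fin 4 → ℝ, (X 0) ^ 2 = (X 1) ^ 2 + (X 2) ^ 2 + (X 3) ^ 2 →
    ∑ α, ∑ β, A α β * X α * X β = 0

/-- The null form A^{αβ} (∂_α v)(∂_β w). -/
def QF (A : Fin 4 → Fin 4 → ℝ) (v w : STn 3 → ℝ) (p : STn 3) : ℝ :=
  ∑ α, ∑ β, A α β * pd4 α v p * pd4 β w p

/-- The good derivative T_j = ∂_j + (x_j/|x|) ∂_t. -/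
def TD (j : Fin 3) (f : STn 3 → ℝ) (p : STn 3) : ℝ := dxD j f p + (p.2 j / ‖p.2‖) * dtD f p

end

/-- The null covector `(1, -x/|x|)`. -/
noncomputable def nullCov (z : STn 3) : Fin 4 → ℝ := Fin.cases 1 (fun j => -(z.2 j / ‖z.2‖))

/-- The good derivatives indexed by `Fin 4`, with zero in the time slot. -/
noncomputable def goodD (w : STn 3 → ℝ) (z : STn 3) : Fin 4 → ℝ :=
  Fin.cases 0 (fun j => TD j w z)

lemma pd4_eq_goodD_add (w : STn 3 → ℝ) (z : STn 3) (α : Fin 4) :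
    pd4 α w z = goodD w z α + nullCov z α * dtD w z := by
  refine Fin.cases ?_ (fun j => ?_) α
  · simp [pd4, goodD, nullCov]
  · simp [pd4, goodD, nullCov, TD]

lemma abs_goodD_le (w : STn 3 → ℝ) (z : STn 3) (α : Fin 4) :
    |goodD w z α| ≤ ∑ j, |TD j w z| := by
  refine Fin.cases ?_ (fun j => ?_) α
  · simpa [goodD] using Finset.sum_nonneg fun j _ => abs_nonneg (TD j w z)
  · exact Finset.single_le_sum (f := fun j => |TD j w z|) (fun j _ => abs_nonneg _)
      (Finset.mem_univ j)

lemma abs_nullCov_le (z : STn 3) (α : Fin 4) : |nullCov z α| ≤ 1 := by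
  refine Fin.cases ?_ (fun j => ?_) α
  · simp [nullCov]
  · have h : |z.2 j| ≤ ‖z.2‖ := by simpa using PiLp.norm_apply_le z.2 j
    simpa [nullCov, abs_div] using div_le_one_of_le₀ h (norm_nonneg _)

lemma nullCov_null (z : STn 3) (hz : z.2 ≠ 0) :
    nullCov z 0 ^ 2 = nullCov z 1 ^ 2 + nullCov z 2 ^ 2 + nullCov z 3 ^ 2 := by
  have h := EuclideanSpace.norm_sq_eq z.2
  simp only [Fin.sum_univ_three, Real.norm_eq_abs, sq_abs] at h
  have h0 : ‖z.2‖ ≠ 0 := norm_ne_zero_iff.mpr hz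
  change (1 : ℝ) ^ 2 = (-(z.2 0 / ‖z.2‖)) ^ 2 + (-(z.2 1 / ‖z.2‖)) ^ 2 + (-(z.2 2 / ‖z.2‖)) ^ 2
  field_simp
  linarith

lemma abs_pd4_le (w : STn 3 → ℝ) (z : STn 3) (α : Fin 4) : |pd4 α w z| ≤ gradN w z := by
  have hs : ∀ j, 0 ≤ dxD j w z ^ 2 := fun j => sq_nonneg _
  refine Real.abs_le_sqrt ?_
  refine Fin.cases ?_ (fun j => ?_) α
  · exact le_add_of_nonneg_right (Finset.sum_nonneg fun j _ => hs j)
  · exact le_add_of_nonneg_of_le (sq_nonneg _)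
      (Finset.single_le_sum (f := fun j => dxD j w z ^ 2) (fun j _ => hs j) (Finset.mem_univ j))

/-- The null condition removes the term of the null form that has no good derivative. -/
lemma QF_eq_of_nullCond (A : Fin 4 → Fin 4 → ℝ) (hA : NullCond A) (v w : STn 3 → ℝ)
    (z : STn 3) (hz : z.2 ≠ 0) :
    QF A v w z = ∑ α, ∑ β, A α β *
      (goodD v z α * pd4 β w z + nullCov z α * dtD v z * goodD w z β) := by
  have h0 := hA (nullCov z) (nullCov_null z hz)
  rw [← sub_eq_zero]
  calc _ = dtD v z * dtD w z * ∑ α, ∑ β, A α β * nullCov z α * nullCov z β := by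
        simp only [QF, Finset.mul_sum, ← Finset.sum_sub_distrib]
        refine Finset.sum_congr rfl fun α _ => Finset.sum_congr rfl fun β _ => ?_
        rw [pd4_eq_goodD_add v z α, pd4_eq_goodD_add w z β]
        ring
    _ = 0 := by rw [h0, mul_zero]

/-- Pointwise estimate for null forms in terms of the good derivatives T_j
(Lemma B.2). -/
theorem null_form_good_derivatives (A : Fin 4 → Fin 4 → ℝ) (hA : NullCond A) :
    ∃ C > (0 : ℝ), ∀ w₁ w₂ : STn 3 → ℝ, ContDiff ℝ ∞ w₁ → ContDiff ℝ ∞ w₂ →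
      ∀ z : STn 3, z.2 ≠ 0 →
        |QF A w₁ w₂ z| ≤
          C * ((∑ j, |TD j w₁ z|) * gradN w₂ z + gradN w₁ z * (∑ j, |TD j w₂ z|)) := by
  have hM : 0 ≤ ∑ α, ∑ β, |A α β| :=
    Finset.sum_nonneg fun α _ => Finset.sum_nonneg fun β _ => abs_nonneg _
  refine ⟨1 + ∑ α, ∑ β, |A α β|, by linarith, fun w₁ w₂ _ _ z hz => ?_⟩
  have hG : ∀ w : STn 3 → ℝ, 0 ≤ gradN w z := fun w => Real.sqrt_nonneg _
  have hS : ∀ w : STn 3 → ℝ, 0 ≤ ∑ j, |TD j w z| :=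
    fun w => Finset.sum_nonneg fun j _ => abs_nonneg _
  set R := (∑ j, |TD j w₁ z|) * gradN w₂ z + gradN w₁ z * (∑ j, |TD j w₂ z|)
  have hR0 : 0 ≤ R := add_nonneg (mul_nonneg (hS _) (hG _)) (mul_nonneg (hG _) (hS _))
  have hterm : ∀ α β, |A α β *
      (goodD w₁ z α * pd4 β w₂ z + nullCov z α * dtD w₁ z * goodD w₂ z β)| ≤ |A α β| * R := by
    intro α β
    rw [abs_mul]
    refine mul_le_mul_of_nonneg_left ((abs_add_le _ _).trans (add_le_add ?_ ?_)) (abs_nonneg _)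
    · rw [abs_mul]
      exact mul_le_mul (abs_goodD_le _ _ _) (abs_pd4_le _ _ _) (abs_nonneg _) (hS _)
    · rw [abs_mul, abs_mul]
      refine mul_le_mul ?_ (abs_goodD_le _ _ _) (abs_nonneg _) (hG _)
      exact (mul_le_of_le_one_left (abs_nonneg _) (abs_nullCov_le z α)).trans (abs_pd4_le w₁ z 0)
  rw [QF_eq_of_nullCond A hA w₁ w₂ z hz]
  calc _ ≤ ∑ α, ∑ β, |A α β| * R :=
        (Finset.abs_sum_le_sum_abs _ _).trans (Finset.sum_le_sum fun α _ =>
          (Finset.abs_sum_le_sum_abs _ _).trans (Finset.sum_le_sum fun β _ => hterm α β))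
    _ = (∑ α, ∑ β, |A α β|) * R := by simp only [Finset.sum_mul]
    _ ≤ (1 + ∑ α, ∑ β, |A α β|) * R := by nlinarith
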